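/- arXiv:2603.27072 — 2 statements merged into one kernel-verified Lean document; each statement's English description precedes it below -/
import Mathlib

section
/- Let L ≥ 3 be an integer, q := 2/L, and let M♮ ∈ ℝ^{d_L × d_0}. Suppose min_{1 ≤ i ≤ L−1} d_i ≥ min{d_0, d_L}, and suppose the regularization parameter satisfies λ > ( σ_1(M♮) / ( (1 − q/2)·(1 − q)^{(q−1)/(2−q)} ) )^{2−q}, where σ_1(M♮) is the largest singular value of M♮. Then for every global minimizer (W*_1, …, W*_L) of the objective 𝓛(W_1, …, W_L) := ‖M♮ − W_L···W_1‖_F² + (λ/L)·Σ_{i=1}^L ‖W_i‖_F² with W_i ∈ ℝ^{d_i × d_{i−1}}, the end-to-end product satisfies W*_L·W*_{L−1}···W*_1 = 0. -/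
open Matrix

/-- The `i`-th largest singular value of a real matrix `A` (`0`-indexed),
i.e. the non-increasing rearrangement of the square roots of the
eigenvalues of the positive semidefinite matrix `Aᵀ A`. -/
noncomputable def singularValue {m n : ℕ} (A : Matrix (Fin m) (Fin n) ℝ) (i : Fin (min m n)) : ℝ :=
  let ev : Fin n → ℝ := fun j => Real.sqrt ((Matrix.isHermitian_conjTranspose_mul_self A).eigenvalues j)
  (ev ∘ Tuple.sort ev) ((Fin.castLE (Nat.min_le_right m n) i).rev)

/-- Frobenius norm of a real matrix. -/
noncomputable def frobNorm {m n : ℕ} (A : Matrix (Fin m) (Fin n) ℝ) : ℝ :=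
  Real.sqrt (∑ i, ∑ j, (A i j) ^ 2)

/-- `‖A‖_{S^q}^q = ∑_{i=1}^{min m n} σ_i(A)^q`. -/
noncomputable def schattenPow {m n : ℕ} (A : Matrix (Fin m) (Fin n) ℝ) (q : ℝ) : ℝ :=
  ∑ i : Fin (min m n), (singularValue A i) ^ q

/-- Schatten-`q` quasi-norm `‖A‖_{S^q} = (∑ σ_i(A)^q)^{1/q}`. -/
noncomputable def schattenNorm {m n : ℕ} (A : Matrix (Fin m) (Fin n) ℝ) (q : ℝ) : ℝ :=
  (schattenPow A q) ^ (1 / q)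

/-- `chainProd d W L = W_{L-1} * ⋯ * W_1 * W_0` (the end-to-end product of the
first `L` layers, `W_i : ℝ^{d_{i+1} × d_i}`). -/
noncomputable def chainProd (d : ℕ → ℕ) (W : ∀ i : ℕ, Matrix (Fin (d (i + 1))) (Fin (d i)) ℝ) :
    (L : ℕ) → Matrix (Fin (d L)) (Fin (d 0)) ℝ
  | 0 => 1
  | (L + 1) => W L * chainProd d W L

/-- The ℓ²-regularized deep matrix factorization objective
`𝓛(W) = ‖M♮ − W_L ⋯ W_1‖_F² + (λ/L) ∑ᵢ ‖W_i‖_F²`. -/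
noncomputable def deepLoss (L : ℕ) (lam : ℝ) (d : ℕ → ℕ)
    (Mnat : Matrix (Fin (d L)) (Fin (d 0)) ℝ)
    (W : ∀ i : ℕ, Matrix (Fin (d (i + 1))) (Fin (d i)) ℝ) : ℝ :=
  frobNorm (Mnat - chainProd d W L) ^ 2 + (lam / L) * ∑ i : Fin L, frobNorm (W i.1) ^ 2

/-- The Schatten-regularized objective
`𝓛_{M♮}(M) = ‖M♮ − M‖_F² + λ‖M‖_{S^{2/L}}^{2/L}`. -/
noncomputable def schattenLoss (L : ℕ) (lam : ℝ) {m n : ℕ}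
    (Mnat M : Matrix (Fin m) (Fin n) ℝ) : ℝ :=
  frobNorm (Mnat - M) ^ 2 + lam * schattenPow M (2 / L)

/-!
Replacing two consecutive layers `(B, A)` by `(B * G⁻¹, G * A)` does not change the end-to-end
product, so a global minimizer minimizes `‖G * A‖² + ‖B * G⁻¹‖²` at `G = 1`. Scaling a single
direction `v` by `g` and differentiating at `g = 1` gives `vᵀ A Aᵀ v = vᵀ Bᵀ B v`, hence
`Bᵀ * B = A * Aᵀ`. Consequently the Gram matrix `S = (W 0)ᵀ * W 0` of the first layer satisfies
`Mᵀ * M = S ^ L` for the product `M`, and the regularizer equals `lam * tr S`.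

Expand `loss(W) - loss(0)` in an orthonormal eigenbasis `b` of `S`. With `x = ‖M b_j‖`, the
eigenvalue of `b_j` is `x ^ (2 / L) = x ^ q`, and by Cauchy-Schwarz the contribution of `b_j` is at
least `x² - 2 σ₁ x + lam x ^ q`. Weighted AM-GM shows that beyond the threshold this is positive
unless `x = 0`.
-/

section ScalarProblem

/-- The value of the regularization parameter beyond which `x = 0` is the unique minimizer over
`x ≥ 0` of `x ↦ (s - x) ^ 2 + lam * x ^ q`, for `0 < q ≤ 1`. At `q = 1` the base and
exponent of `(1 - q) ^ _` both vanish, and the convention `0 ^ 0 = 1` gives the soft-thresholding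
value `2 * s`. -/
noncomputable def shrinkageThreshold (q s : ℝ) : ℝ :=
  (s / ((1 - q / 2) * (1 - q) ^ ((q - 1) / (2 - q)))) ^ (2 - q)

lemma shrinkageThreshold_nonneg {q s : ℝ} (hq : q ≤ 1) (hs : 0 ≤ s) :
    0 ≤ shrinkageThreshold q s := by
  have hden : 0 ≤ (1 - q / 2) * (1 - q) ^ ((q - 1) / (2 - q)) :=
    mul_nonneg (by linarith) (Real.rpow_nonneg (by linarith) _)
  exact Real.rpow_nonneg (div_nonneg hs hden) _

lemma lt_rpow_of_shrinkageThreshold_lt {q s lam : ℝ} (hq : q ≤ 1) (hs : 0 ≤ s)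
    (hlam : shrinkageThreshold q s < lam) :
    2 * s < (2 - q) * (1 - q) ^ ((q - 1) / (2 - q)) * lam ^ (1 / (2 - q)) := by
  have hden : 0 < (1 - q / 2) * (1 - q) ^ ((q - 1) / (2 - q)) := by
    refine mul_pos (by linarith) ?_
    rcases hq.eq_or_lt with rfl | hq
    · simp
    · exact Real.rpow_pos_of_pos (by linarith) _
  have hroot : s / ((1 - q / 2) * (1 - q) ^ ((q - 1) / (2 - q))) < lam ^ (1 / (2 - q)) := by
    rw [one_div]
    exact (Real.lt_rpow_inv_iff_of_pos (by positivity)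
      ((shrinkageThreshold_nonneg hq hs).trans hlam.le) (by linarith)).2 hlam
  rw [div_lt_iff₀ hden] at hroot
  linarith

/-- Weighted AM-GM with weights `(1 - q) / (2 - q)` and `1 / (2 - q)`, for which the powers of `x`
cancel in the geometric mean. -/
lemma mul_rpow_le_add_mul_rpow_sub_one {q lam x : ℝ} (hq : q ≤ 1) (hlam : 0 ≤ lam) (hx : 0 < x) :
    (2 - q) * (1 - q) ^ ((q - 1) / (2 - q)) * lam ^ (1 / (2 - q)) ≤ x + lam * x ^ (q - 1) := by
  rcases hq.eq_or_lt with rfl | hq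
  · norm_num [hx.le]
  have hp : 0 < 1 - q := by linarith
  have hr : 0 < 2 - q := by linarith
  set w := (1 - q) / (2 - q) with hw
  have hw' : 1 / (2 - q) = 1 - w := by rw [hw]; field_simp; ring
  have hexp : (q - 1) / (2 - q) = -w := by rw [hw]; ring
  have hxexp : (q - 1) * (1 - w) = -w := by rw [hw]; field_simp; ring
  have cancel_x : x ^ w * x ^ (-w) = 1 := by rw [← Real.rpow_add hx]; simp
  have collect_r : (2 - q) ^ w * (2 - q) ^ (1 - w) = 2 - q := by rw [← Real.rpow_add hr]; simp
  calc (2 - q) * (1 - q) ^ ((q - 1) / (2 - q)) * lam ^ (1 / (2 - q))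
      = (x * (2 - q) / (1 - q)) ^ w * (lam * x ^ (q - 1) * (2 - q)) ^ (1 - w) := by
        rw [Real.div_rpow (by positivity) hp.le, Real.mul_rpow hx.le hr.le,
          Real.mul_rpow (by positivity) hr.le, Real.mul_rpow hlam (by positivity),
          ← Real.rpow_mul hx.le, hxexp, hexp, hw', Real.rpow_neg hp.le, div_eq_mul_inv]
        linear_combination (-((1 - q) ^ w)⁻¹ * lam ^ (1 - w)) *
          ((2 - q) ^ w * (2 - q) ^ (1 - w) * cancel_x + collect_r)
    _ ≤ w * (x * (2 - q) / (1 - q)) + (1 - w) * (lam * x ^ (q - 1) * (2 - q)) :=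
        Real.geom_mean_le_arith_mean2_weighted (by positivity) (by rw [← hw']; positivity)
          (by positivity) (by positivity) (by ring)
    _ = x + lam * x ^ (q - 1) := by rw [← hw', hw]; field_simp

lemma sq_sub_add_mul_rpow_pos {q s lam x : ℝ} (hq : q ≤ 1) (hs : 0 ≤ s)
    (hlam : shrinkageThreshold q s < lam) (hx : 0 < x) :
    0 < x ^ 2 - 2 * (s * x) + lam * x ^ q := by
  have hlam0 : 0 ≤ lam := (shrinkageThreshold_nonneg hq hs).trans hlam.le
  have hslope : 0 < x + lam * x ^ (q - 1) - 2 * s := by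
    linarith [lt_rpow_of_shrinkageThreshold_lt hq hs hlam,
      mul_rpow_le_add_mul_rpow_sub_one hq hlam0 hx]
  calc 0 < x * (x + lam * x ^ (q - 1) - 2 * s) := mul_pos hx hslope
    _ = x ^ 2 - 2 * (s * x) + lam * x ^ q := by
      rw [Real.rpow_sub_one hx.ne']; field_simp; ring

lemma two_div_natCast_le_one {L : ℕ} (hL : 2 ≤ L) : (2 / L : ℝ) ≤ 1 :=
  div_le_one_of_le₀ (by exact_mod_cast hL) (by positivity)

lemma sqrt_pow_rpow_two_div {t : ℝ} (ht : 0 ≤ t) {L : ℕ} (hL : L ≠ 0) :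
    √(t ^ L) ^ (2 / L : ℝ) = t := by
  rw [Real.sqrt_eq_rpow, ← Real.rpow_natCast, ← Real.rpow_mul ht, ← Real.rpow_mul ht,
    show (L : ℝ) * (1 / 2) * (2 / L) = 1 by field_simp, Real.rpow_one]

end ScalarProblem

section QuadraticForms

variable {m n p : Type*} [Fintype m] [Fintype n] [Fintype p]

lemma dotProduct_le_mul_sqrt {s : ℝ} (hs : 0 ≤ s) {u w : n → ℝ} (hu : u ⬝ᵥ u ≤ s ^ 2) :
    u ⬝ᵥ w ≤ s * √(w ⬝ᵥ w) := by
  calc u ⬝ᵥ w ≤ √(u ⬝ᵥ u) * √(w ⬝ᵥ w) := by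
        simpa only [dotProduct, sq] using Real.sum_mul_le_sqrt_mul_sqrt Finset.univ u w
    _ ≤ s * √(w ⬝ᵥ w) := by
      gcongr
      exact (Real.sqrt_le_left hs).2 hu

lemma dotProduct_transpose_mul_mulVec {R : Type*} [CommSemiring R] (A : Matrix m n R)
    (B : Matrix m p R) (v : n → R) (w : p → R) : v ⬝ᵥ (Aᵀ * B) *ᵥ w = (A *ᵥ v) ⬝ᵥ (B *ᵥ w) := by
  rw [← mulVec_mulVec, dotProduct_mulVec, vecMul_transpose]

open scoped MatrixOrder in
lemma eq_of_dotProduct_mulVec_self_eq {S T : Matrix n n ℝ} (hS : S.IsHermitian)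
    (hT : T.IsHermitian) (h : ∀ v, v ⬝ᵥ S *ᵥ v = v ⬝ᵥ T *ᵥ v) : S = T := by
  refine le_antisymm ?_ ?_
  · exact PosSemidef.of_dotProduct_mulVec_nonneg (hT.sub hS) fun v ↦ by
      simp [sub_mulVec, dotProduct_sub, h]
  · exact PosSemidef.of_dotProduct_mulVec_nonneg (hS.sub hT) fun v ↦ by
      simp [sub_mulVec, dotProduct_sub, h]

open scoped MatrixOrder in
lemma dotProduct_mulVec_self_le_of_eigenvalues_le [DecidableEq n] {S : Matrix n n ℝ}
    (hS : S.IsHermitian) {c : ℝ} (hc : ∀ j, hS.eigenvalues j ≤ c) (v : n → ℝ) :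
    v ⬝ᵥ S *ᵥ v ≤ c * (v ⬝ᵥ v) := by
  have hle : S ≤ algebraMap ℝ _ c := by
    refine le_algebraMap_of_spectrum_le (fun x hx ↦ ?_) hS
    obtain ⟨j, rfl⟩ := hS.spectrum_real_eq_range_eigenvalues ▸ hx
    exact hc j
  have := PosSemidef.dotProduct_mulVec_nonneg (Matrix.le_iff.1 hle) v
  simpa [sub_mulVec, dotProduct_sub, Algebra.algebraMap_eq_smul_one, smul_mulVec] using this

lemma trace_transpose_mul_eq_sum_dotProduct {ι : Type*} [Fintype ι]
    (b : OrthonormalBasis ι ℝ (EuclideanSpace ℝ n)) (A B : Matrix m n ℝ) :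
    (Aᵀ * B).trace = ∑ j, (A *ᵥ b j) ⬝ᵥ (B *ᵥ b j) := by
  classical
  calc (Aᵀ * B).trace = LinearMap.trace ℝ _ (toLpLin 2 2 (Aᵀ * B)) := by
        rw [toLpLin_eq_toLin, trace_toLin_eq]
    _ = ∑ j, (A *ᵥ b j) ⬝ᵥ (B *ᵥ b j) := by
      rw [LinearMap.trace_eq_sum_inner _ b]
      refine Finset.sum_congr rfl fun j _ ↦ ?_
      rw [← dotProduct_transpose_mul_mulVec, EuclideanSpace.inner_eq_star_dotProduct,
        dotProduct_comm]
      simp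

lemma dotProduct_self_of_orthonormalBasis {ι : Type*} [Fintype ι]
    (b : OrthonormalBasis ι ℝ (EuclideanSpace ℝ n)) (j : ι) : ⇑(b j) ⬝ᵥ ⇑(b j) = 1 := by
  simpa only [EuclideanSpace.inner_eq_star_dotProduct, star_trivial] using b.inner_eq_one j

lemma pow_mulVec_eq_smul {R : Type*} [CommSemiring R] [DecidableEq n] {S : Matrix n n R}
    {v : n → R} {t : R} (h : S *ᵥ v = t • v) (k : ℕ) : (S ^ k) *ᵥ v = t ^ k • v := by
  induction k with
  | zero => simp
  | succ k ih => rw [pow_succ, ← mulVec_mulVec, h, mulVec_smul, ih, smul_smul, pow_succ']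

lemma transpose_mul_pow_mul {R : Type*} [CommSemiring R] [DecidableEq m] [DecidableEq n]
    (A : Matrix m n R) (k : ℕ) :
    Aᵀ * (A * Aᵀ) ^ k * A = (Aᵀ * A) ^ (k + 1) := by
  induction k with
  | zero => simp
  | succ k ih =>
    rw [pow_succ _ (k + 1), ← ih, pow_succ]
    simp only [Matrix.mul_assoc]

lemma dotProduct_mulVec_eigenvectorBasis [DecidableEq n] {S : Matrix n n ℝ} (hS : S.IsHermitian)
    {M : Matrix m n ℝ} {L : ℕ} (hM : Mᵀ * M = S ^ L) (j : n) :
    (M *ᵥ hS.eigenvectorBasis j) ⬝ᵥ (M *ᵥ hS.eigenvectorBasis j) = hS.eigenvalues j ^ L := by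
  rw [← dotProduct_transpose_mul_mulVec, hM, pow_mulVec_eq_smul (hS.mulVec_eigenvectorBasis j),
    dotProduct_smul, dotProduct_self_of_orthonormalBasis, smul_eq_mul, mul_one]

end QuadraticForms

section AxialScaling

variable {n : Type*} [Fintype n] [DecidableEq n]

/-- The linear map that multiplies `v` by `g` and fixes the orthogonal complement of `v`. These
maps are the test transformations `(B, A) ↦ (B * G⁻¹, G * A)` that leave the product `B * A`
unchanged. For `v = 0` it is the identity. -/
noncomputable def axialScaling (v : n → ℝ) (g : ℝ) : Matrix n n ℝ :=
  1 + ((g - 1) / (v ⬝ᵥ v)) • vecMulVec v v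

lemma axialScaling_transpose (v : n → ℝ) (g : ℝ) : (axialScaling v g)ᵀ = axialScaling v g := by
  simp [axialScaling]

lemma axialScaling_one (v : n → ℝ) : axialScaling v 1 = 1 := by
  simp [axialScaling]

lemma axialScaling_mul {v : n → ℝ} (hv : v ≠ 0) (g h : ℝ) :
    axialScaling v g * axialScaling v h = axialScaling v (g * h) := by
  have hvv : v ⬝ᵥ v ≠ 0 := dotProduct_self_eq_zero.not.2 hv
  simp only [axialScaling, Matrix.add_mul, Matrix.mul_add, Matrix.one_mul, Matrix.mul_one,
    Matrix.smul_mul, Matrix.mul_smul, vecMulVec_mul_vecMulVec, vecMulVec_smul]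
  match_scalars
  · ring
  · field_simp
    ring

lemma trace_axialScaling_mul (v : n → ℝ) (g : ℝ) (S : Matrix n n ℝ) :
    (axialScaling v g * S).trace = S.trace + (g - 1) * ((v ⬝ᵥ S *ᵥ v) / (v ⬝ᵥ v)) := by
  simp only [axialScaling, Matrix.add_mul, Matrix.one_mul, Matrix.smul_mul, trace_add, trace_smul,
    vecMulVec_mul, trace_vecMulVec, smul_eq_mul, dotProduct_mulVec]
  rw [dotProduct_comm v (v ᵥ* S)]
  ring

end AxialScaling

section FrobeniusNorm

variable {m n p : ℕ}

lemma frobNorm_sq (A : Matrix (Fin m) (Fin n) ℝ) : frobNorm A ^ 2 = (Aᵀ * A).trace := by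
  rw [frobNorm, Real.sq_sqrt (by positivity), Finset.sum_comm]
  simp [Matrix.trace, Matrix.mul_apply, sq]

lemma frobNorm_transpose (A : Matrix (Fin m) (Fin n) ℝ) : frobNorm Aᵀ = frobNorm A := by
  rw [frobNorm, frobNorm, Finset.sum_comm]
  rfl

lemma frobNorm_sub_sq (A B : Matrix (Fin m) (Fin n) ℝ) :
    frobNorm (A - B) ^ 2 = frobNorm A ^ 2 - 2 * (Aᵀ * B).trace + frobNorm B ^ 2 := by
  have hsymm : (Bᵀ * A).trace = (Aᵀ * B).trace := by
    rw [← trace_transpose, transpose_mul, transpose_transpose]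
  simp only [frobNorm_sq, transpose_sub, Matrix.sub_mul, Matrix.mul_sub, trace_sub, hsymm]
  ring

lemma frobNorm_zero : frobNorm (0 : Matrix (Fin m) (Fin n) ℝ) = 0 := by
  simp [frobNorm]

lemma frobNorm_axialScaling_mul_sq {v : Fin p → ℝ} (hv : v ≠ 0) (g : ℝ)
    (A : Matrix (Fin p) (Fin n) ℝ) :
    frobNorm (axialScaling v g * A) ^ 2 =
      frobNorm A ^ 2 + (g ^ 2 - 1) * ((v ⬝ᵥ (A * Aᵀ) *ᵥ v) / (v ⬝ᵥ v)) := by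
  calc frobNorm (axialScaling v g * A) ^ 2
      = (axialScaling v (g ^ 2) * (A * Aᵀ)).trace := by
        rw [frobNorm_sq, transpose_mul, axialScaling_transpose, Matrix.mul_assoc, trace_mul_comm,
          sq, ← axialScaling_mul hv]
        simp only [Matrix.mul_assoc]
    _ = frobNorm A ^ 2 + (g ^ 2 - 1) * ((v ⬝ᵥ (A * Aᵀ) *ᵥ v) / (v ⬝ᵥ v)) := by
      rw [trace_axialScaling_mul, frobNorm_sq, trace_mul_comm]

lemma frobNorm_mul_axialScaling_sq {v : Fin p → ℝ} (hv : v ≠ 0) (g : ℝ)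
    (B : Matrix (Fin m) (Fin p) ℝ) :
    frobNorm (B * axialScaling v g) ^ 2 =
      frobNorm B ^ 2 + (g ^ 2 - 1) * ((v ⬝ᵥ (Bᵀ * B) *ᵥ v) / (v ⬝ᵥ v)) := by
  rw [← frobNorm_transpose, transpose_mul, axialScaling_transpose, frobNorm_axialScaling_mul_sq hv,
    frobNorm_transpose, transpose_transpose]

lemma eq_of_forall_add_le_sq_mul_add_inv_sq_mul {a b : ℝ}
    (h : ∀ g : ℝ, g ≠ 0 → a + b ≤ g ^ 2 * a + g⁻¹ ^ 2 * b) : a = b := by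
  have hmin : IsLocalMin (fun g : ℝ ↦ g ^ 2 * a + g⁻¹ ^ 2 * b) 1 := by
    filter_upwards [eventually_ne_nhds one_ne_zero] with g hg
    simpa using h g hg
  have hid := hasDerivAt_id' (1 : ℝ)
  have hinv := hasDerivAt_inv (one_ne_zero (α := ℝ))
  have hderiv := hmin.hasDerivAt_eq_zero
    (((hid.fun_pow 2).mul_const a).add ((hinv.fun_pow 2).mul_const b))
  norm_num at hderiv
  linarith

lemma transpose_mul_self_eq_mul_transpose_of_frobNorm_min {A : Matrix (Fin p) (Fin n) ℝ}
    {B : Matrix (Fin m) (Fin p) ℝ}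
    (hmin : ∀ (A' : Matrix (Fin p) (Fin n) ℝ) (B' : Matrix (Fin m) (Fin p) ℝ), B' * A' = B * A →
      frobNorm A ^ 2 + frobNorm B ^ 2 ≤ frobNorm A' ^ 2 + frobNorm B' ^ 2) :
    Bᵀ * B = A * Aᵀ := by
  refine (eq_of_dotProduct_mulVec_self_eq ?_ ?_ fun v ↦ ?_).symm
  · exact isHermitian_mul_conjTranspose_self A
  · exact isHermitian_conjTranspose_mul_self B
  rcases eq_or_ne v 0 with rfl | hv
  · simp
  have hvv : v ⬝ᵥ v ≠ 0 := dotProduct_self_eq_zero.not.2 hv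
  refine (div_left_inj' hvv).1 (eq_of_forall_add_le_sq_mul_add_inv_sq_mul fun g hg ↦ ?_)
  have hprod : B * axialScaling v g⁻¹ * (axialScaling v g * A) = B * A := by
    rw [Matrix.mul_assoc, ← Matrix.mul_assoc (axialScaling v g⁻¹), axialScaling_mul hv,
      inv_mul_cancel₀ hg, axialScaling_one, Matrix.one_mul]
  have hle := hmin _ _ hprod
  rw [frobNorm_axialScaling_mul_sq hv, frobNorm_mul_axialScaling_sq hv] at hle
  linarith

end FrobeniusNorm

section SingularValue

variable {m n : ℕ}

lemma singularValue_nonneg (A : Matrix (Fin m) (Fin n) ℝ) (i : Fin (min m n)) :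
    0 ≤ singularValue A i :=
  Real.sqrt_nonneg _

lemma sqrt_eigenvalues_le_singularValue_zero (A : Matrix (Fin m) (Fin n) ℝ) (h : 0 < min m n)
    (j : Fin n) :
    √((isHermitian_conjTranspose_mul_self A).eigenvalues j) ≤ singularValue A ⟨0, h⟩ := by
  set ev : Fin n → ℝ := fun j ↦ √((isHermitian_conjTranspose_mul_self A).eigenvalues j)
  have hlast : (Tuple.sort ev).symm j ≤ (Fin.castLE (Nat.min_le_right m n) ⟨0, h⟩).rev := by
    rw [Fin.le_def, Fin.val_rev, Fin.val_castLE]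
    exact Nat.le_sub_one_of_lt (Fin.is_lt _)
  calc ev j = (ev ∘ Tuple.sort ev) ((Tuple.sort ev).symm j) := by simp
    _ ≤ singularValue A ⟨0, h⟩ := Tuple.monotone_sort ev hlast

lemma dotProduct_mulVec_le_singularValue_sq_mul (A : Matrix (Fin m) (Fin n) ℝ)
    (h : 0 < min m n) (v : Fin n → ℝ) :
    (A *ᵥ v) ⬝ᵥ (A *ᵥ v) ≤ singularValue A ⟨0, h⟩ ^ 2 * (v ⬝ᵥ v) := by
  rw [← dotProduct_transpose_mul_mulVec]
  exact dotProduct_mulVec_self_le_of_eigenvalues_le (isHermitian_conjTranspose_mul_self A)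
    (fun j ↦ (Real.sqrt_le_left (singularValue_nonneg A _)).1
      (sqrt_eigenvalues_le_singularValue_zero A h j)) v

end SingularValue

section Shrinkage

lemma dotProduct_self_sub_add_mul_pos {ι : Type*} [Fintype ι] {L : ℕ} (hL : 2 ≤ L) {s lam : ℝ}
    (hs : 0 ≤ s) (hlam : shrinkageThreshold (2 / L) s < lam) {u w : ι → ℝ} (hu : u ⬝ᵥ u ≤ s ^ 2)
    {t : ℝ} (ht : 0 ≤ t) (hw : w ⬝ᵥ w = t ^ L) (hw0 : w ≠ 0) :
    0 < w ⬝ᵥ w - 2 * (u ⬝ᵥ w) + lam * t := by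
  have hww : 0 ≤ w ⬝ᵥ w := hw ▸ pow_nonneg ht L
  have hnorm : 0 < √(w ⬝ᵥ w) := Real.sqrt_pos.2 (hww.lt_of_ne' (dotProduct_self_eq_zero.not.2 hw0))
  calc 0 < √(w ⬝ᵥ w) ^ 2 - 2 * (s * √(w ⬝ᵥ w)) + lam * √(w ⬝ᵥ w) ^ (2 / L : ℝ) :=
        sq_sub_add_mul_rpow_pos (two_div_natCast_le_one hL) hs hlam hnorm
    _ = w ⬝ᵥ w - 2 * (s * √(w ⬝ᵥ w)) + lam * t := by
      rw [Real.sq_sqrt hww, hw, sqrt_pow_rpow_two_div ht (by omega)]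
    _ ≤ w ⬝ᵥ w - 2 * (u ⬝ᵥ w) + lam * t := by
      gcongr
      exact dotProduct_le_mul_sqrt hs hu

lemma eq_zero_of_frobNorm_sub_sq_add_trace_le {m n L : ℕ} (hL : 2 ≤ L) {s lam : ℝ} (hs : 0 ≤ s)
    (hlam : shrinkageThreshold (2 / L) s < lam) {N M : Matrix (Fin m) (Fin n) ℝ}
    (hN : ∀ v, (N *ᵥ v) ⬝ᵥ (N *ᵥ v) ≤ s ^ 2 * (v ⬝ᵥ v)) {S : Matrix (Fin n) (Fin n) ℝ}
    (hS : S.PosSemidef) (hM : Mᵀ * M = S ^ L)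
    (hle : frobNorm (N - M) ^ 2 + lam * S.trace ≤ frobNorm N ^ 2) : M = 0 := by
  set b := hS.1.eigenvectorBasis
  set t := hS.1.eigenvalues
  set gain : Fin n → ℝ := fun j ↦
    (M *ᵥ b j) ⬝ᵥ (M *ᵥ b j) - 2 * ((N *ᵥ b j) ⬝ᵥ (M *ᵥ b j)) + lam * t j with hgain
  have hlam0 : 0 ≤ lam := (shrinkageThreshold_nonneg (two_div_natCast_le_one hL) hs).trans hlam.le
  have hgain_pos : ∀ j, M *ᵥ b j ≠ 0 → 0 < gain j := fun j ↦
    dotProduct_self_sub_add_mul_pos hL hs hlam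
      (by simpa [dotProduct_self_of_orthonormalBasis] using hN (b j))
      (hS.eigenvalues_nonneg j) (dotProduct_mulVec_eigenvectorBasis hS.1 hM j)
  have hgain_nonneg : ∀ j, 0 ≤ gain j := fun j ↦ by
    by_cases hj : M *ᵥ b j = 0
    · simpa [hgain, hj] using mul_nonneg hlam0 (hS.eigenvalues_nonneg j)
    · exact (hgain_pos j hj).le
  have hgain_sum : ∑ j, gain j ≤ 0 := by
    have hS_trace : S.trace = ∑ j, t j := by simpa using hS.1.trace_eq_sum_eigenvalues
    rw [frobNorm_sub_sq, frobNorm_sq M, trace_transpose_mul_eq_sum_dotProduct b,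
      trace_transpose_mul_eq_sum_dotProduct b, hS_trace] at hle
    simp only [hgain, Finset.sum_add_distrib, Finset.sum_sub_distrib, ← Finset.mul_sum]
    linarith
  have hM_basis : ∀ j, M *ᵥ b j = 0 := fun j ↦ by
    by_contra hj
    exact hgain_sum.not_gt <| Finset.sum_pos' (fun i _ ↦ hgain_nonneg i)
      ⟨j, Finset.mem_univ j, hgain_pos j hj⟩
  refine (trace_conjTranspose_mul_self_eq_zero_iff (A := M)).1 ?_
  rw [conjTranspose_eq_transpose_of_trivial, trace_transpose_mul_eq_sum_dotProduct b]
  simp [hM_basis]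

end Shrinkage

section Chain

variable {d : ℕ → ℕ} {V W : ∀ i : ℕ, Matrix (Fin (d (i + 1))) (Fin (d i)) ℝ} {k L : ℕ}

lemma chainProd_congr (h : ∀ i < k, V i = W i) : chainProd d V k = chainProd d W k := by
  induction k with
  | zero => rfl
  | succ k ih => rw [chainProd, chainProd, h k k.lt_succ_self, ih fun i hi ↦ h i (by omega)]

lemma chainProd_congr_of_le (hkL : k ≤ L) (hk : chainProd d V k = chainProd d W k)
    (h : ∀ i ≥ k, V i = W i) : chainProd d V L = chainProd d W L := by
  induction L, hkL using Nat.le_induction with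
  | base => exact hk
  | succ n hn ih => rw [chainProd, chainProd, h n hn, ih]

/-- The balancedness condition for the first `L` layers of a deep linear network: the Gram matrices
of consecutive layers agree on the space between them. It turns the Gram matrix of the end-to-end
product into a power of that of the first layer. -/
def BalancedLayers (d : ℕ → ℕ) (W : ∀ i : ℕ, Matrix (Fin (d (i + 1))) (Fin (d i)) ℝ)
    (L : ℕ) : Prop :=
  ∀ k, k + 1 < L → (W (k + 1))ᵀ * W (k + 1) = W k * (W k)ᵀ

namespace BalancedLayers

lemma frobNorm_sq_eq (hW : BalancedLayers d W L) (hk : k < L) :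
    frobNorm (W k) ^ 2 = frobNorm (W 0) ^ 2 := by
  induction k with
  | zero => rfl
  | succ k ih => rw [frobNorm_sq, hW k hk, trace_mul_comm, ← frobNorm_sq, ih (by omega)]

lemma transpose_chainProd_mul_pow_mul (hW : BalancedLayers d W L) (hk : k < L) (j : ℕ) :
    (chainProd d W k)ᵀ * ((W k)ᵀ * W k) ^ j * chainProd d W k = ((W 0)ᵀ * W 0) ^ (k + j) := by
  induction k generalizing j with
  | zero => simp [chainProd]
  | succ k ih =>
    rw [hW k hk, add_right_comm, add_assoc, ← ih (by omega) (j + 1), ← transpose_mul_pow_mul,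
      chainProd]
    simp only [transpose_mul, Matrix.mul_assoc]

lemma transpose_chainProd_mul_chainProd (hW : BalancedLayers d W L) :
    (chainProd d W L)ᵀ * chainProd d W L = ((W 0)ᵀ * W 0) ^ L := by
  cases L with
  | zero => simp [chainProd]
  | succ L =>
    rw [← hW.transpose_chainProd_mul_pow_mul L.lt_succ_self 1, chainProd, pow_one]
    simp only [transpose_mul, Matrix.mul_assoc]

end BalancedLayers

variable {lam : ℝ} {Mnat : Matrix (Fin (d L)) (Fin (d 0)) ℝ}

lemma deepLoss_zero (hL : L ≠ 0) : deepLoss L lam d Mnat 0 = frobNorm Mnat ^ 2 := by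
  obtain ⟨K, rfl⟩ := Nat.exists_eq_succ_of_ne_zero hL
  simp [deepLoss, chainProd, frobNorm_zero]

lemma BalancedLayers.deepLoss_eq (hW : BalancedLayers d W L) (hL : L ≠ 0) :
    deepLoss L lam d Mnat W =
      frobNorm (Mnat - chainProd d W L) ^ 2 + lam * ((W 0)ᵀ * W 0).trace := by
  rw [deepLoss, Finset.sum_congr rfl fun i _ ↦ hW.frobNorm_sq_eq i.2, frobNorm_sq (W 0),
    Finset.sum_const, Finset.card_univ, Fintype.card_fin, nsmul_eq_mul]
  field_simp

lemma deepLoss_sub_deepLoss_of_mul_eq (hk : k + 1 < L)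
    (hmul : V (k + 1) * V k = W (k + 1) * W k) (h : ∀ i, i ≠ k → i ≠ k + 1 → V i = W i) :
    deepLoss L lam d Mnat V - deepLoss L lam d Mnat W =
      lam / L * ((frobNorm (V k) ^ 2 + frobNorm (V (k + 1)) ^ 2) -
        (frobNorm (W k) ^ 2 + frobNorm (W (k + 1)) ^ 2)) := by
  have hprod : chainProd d V L = chainProd d W L := by
    refine chainProd_congr_of_le hk ?_ fun i hi ↦ h i (by omega) (by omega)
    rw [chainProd, chainProd, chainProd, chainProd, ← Matrix.mul_assoc, ← Matrix.mul_assoc, hmul,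
      chainProd_congr fun i hi ↦ h i (by omega) (by omega)]
  have hsum : ∑ i : Fin L, (frobNorm (V i) ^ 2 - frobNorm (W i) ^ 2) =
      (frobNorm (V k) ^ 2 - frobNorm (W k) ^ 2) +
        (frobNorm (V (k + 1)) ^ 2 - frobNorm (W (k + 1)) ^ 2) := by
    refine Fintype.sum_eq_add (⟨k, by omega⟩ : Fin L) ⟨k + 1, hk⟩ (by simp) fun i hi ↦ ?_
    rw [h i (Fin.val_ne_of_ne hi.1) (Fin.val_ne_of_ne hi.2), sub_self]
  rw [Finset.sum_sub_distrib] at hsum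
  rw [deepLoss, deepLoss, hprod]
  linear_combination lam / L * hsum

lemma balancedLayers_of_forall_deepLoss_le (hlam : 0 < lam)
    (hW : ∀ V, deepLoss L lam d Mnat W ≤ deepLoss L lam d Mnat V) : BalancedLayers d W L := by
  intro k hk
  refine transpose_mul_self_eq_mul_transpose_of_frobNorm_min fun A' B' hmul ↦ ?_
  set V := Function.update (Function.update W k A') (k + 1) B' with hV
  have hVk : V k = A' := by simp [hV]
  have hVk' : V (k + 1) = B' := by simp [hV]
  have hdiff := deepLoss_sub_deepLoss_of_mul_eq (V := V) (lam := lam) (Mnat := Mnat) hk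
    (by rw [hVk, hVk', hmul]) fun i hi hi' ↦ by simp [hV, hi, hi']
  have hL : (0 : ℝ) < L := by exact_mod_cast (by omega : 0 < L)
  rw [hVk, hVk'] at hdiff
  refine sub_nonneg.1 (nonneg_of_mul_nonneg_right ?_ (div_pos hlam hL))
  exact hdiff ▸ sub_nonneg.2 (hW V)

end Chain

theorem stmt10_general (L : ℕ) (hL : 2 ≤ L) (q : ℝ) (hq : q = 2 / L)
    (d : ℕ → ℕ) (hd0 : 0 < d 0) (hdL : 0 < d L)
    (Mnat : Matrix (Fin (d L)) (Fin (d 0)) ℝ) (lam : ℝ)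
    (hlam : (singularValue Mnat ⟨0, lt_min hdL hd0⟩ /
        ((1 - q / 2) * (1 - q) ^ ((q - 1) / (2 - q)))) ^ (2 - q) < lam)
    (W : ∀ i : ℕ, Matrix (Fin (d (i + 1))) (Fin (d i)) ℝ)
    (hW : ∀ V : ∀ i : ℕ, Matrix (Fin (d (i + 1))) (Fin (d i)) ℝ,
      deepLoss L lam d Mnat W ≤ deepLoss L lam d Mnat V) :
    chainProd d W L = 0 := by
  subst hq
  have hs := singularValue_nonneg Mnat ⟨0, lt_min hdL hd0⟩
  have hlam0 : 0 < lam := (shrinkageThreshold_nonneg (two_div_natCast_le_one hL) hs).trans_lt hlam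
  have hbal : BalancedLayers d W L := balancedLayers_of_forall_deepLoss_le hlam0 hW
  have hle : frobNorm (Mnat - chainProd d W L) ^ 2 + lam * ((W 0)ᵀ * W 0).trace ≤
      frobNorm Mnat ^ 2 := by
    rw [← hbal.deepLoss_eq (by omega), ← deepLoss_zero (L := L) (lam := lam) (by omega)]
    exact hW 0
  exact eq_zero_of_frobNorm_sub_sq_add_trace_le hL hs hlam
    (dotProduct_mulVec_le_singularValue_sq_mul Mnat _) (posSemidef_conjTranspose_mul_self (W 0))
    hbal.transpose_chainProd_mul_chainProd hle

/-- Collapse of the end-to-end minimizer: if the regularization parameter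
exceeds `(σ₁(M♮) / ((1 − q/2)(1 − q)^{(q−1)/(2−q)}))^{2−q}`, then every global
minimizer of the ℓ²-regularized deep matrix factorization objective has
end-to-end product zero. -/
theorem stmt10 (L : ℕ) (hL : 3 ≤ L) (q : ℝ) (hq : q = 2 / L)
    (d : ℕ → ℕ) (hd0 : 0 < d 0) (hdL : 0 < d L)
    (hdim : ∀ i : ℕ, 1 ≤ i → i ≤ L - 1 → min (d 0) (d L) ≤ d i)
    (Mnat : Matrix (Fin (d L)) (Fin (d 0)) ℝ) (lam : ℝ)
    (hlam : (singularValue Mnat ⟨0, lt_min hdL hd0⟩ /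
        ((1 - q / 2) * (1 - q) ^ ((q - 1) / (2 - q)))) ^ (2 - q) < lam)
    (W : ∀ i : ℕ, Matrix (Fin (d (i + 1))) (Fin (d i)) ℝ)
    (hW : ∀ V : ∀ i : ℕ, Matrix (Fin (d (i + 1))) (Fin (d i)) ℝ,
      deepLoss L lam d Mnat W ≤ deepLoss L lam d Mnat V) :
    chainProd d W L = 0 := by
  exact stmt10_general L (by omega) q hq d hd0 hdL Mnat lam hlam W hW
end

section
/- Let A, B ∈ ℝ^{m×n} and r := min{m,n}. Then tr(A·Bᵀ) ≤ Σ_{i=1}^r σ_i(A)·σ_i(B), where σ_1(A) ≥ ⋯ ≥ σ_r(A) and σ_1(B) ≥ ⋯ ≥ σ_r(B) are the non-increasingly ordered singular values of A and B. -/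
open Matrix

/-!
For linear maps `T`, `S` with singular values `σᵢ`, `τⱼ`, choose orthonormal eigenbases `v`, `w` of
`T†T`, `S†S`, and write `T vᵢ = σᵢ uᵢ`, `S wⱼ = τⱼ pⱼ`, where the nonzero `uᵢ` are
orthonormal and so are the nonzero `pⱼ`. Then
`tr (S†T) = ∑ᵢⱼ σᵢ τⱼ ⟪vᵢ, wⱼ⟫ ⟪pⱼ, uᵢ⟫`, and by AM-GM its real part is at most the mean of the two
sums `∑ᵢⱼ σᵢ τⱼ Mᵢⱼ` with `Mᵢⱼ = |⟪vᵢ, wⱼ⟫|²` and `Mᵢⱼ = |⟪uᵢ, pⱼ⟫|²`. By Bessel's inequality both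
matrices `M` are doubly substochastic. Every such matrix is a corner of a doubly stochastic one,
which is a convex combination of permutation matrices, so the rearrangement inequality bounds both
sums by `∑ᵢ σᵢ τᵢ`.
-/

open Module
open scoped InnerProductSpace

section Rearrangement

theorem monovary_sumElim_zero {α ι κ : Type*} [Preorder α] [Zero α] {s t : ι → α}
    (hst : Monovary s t) (hs : 0 ≤ s) (ht : 0 ≤ t) :
    Monovary (Sum.elim s (0 : κ → α)) (Sum.elim t (0 : κ → α)) := by
  rintro (i | i) (j | j) hij
  · exact hst hij
  · exact absurd hij (ht i).not_gt
  · exact hs j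
  · exact le_rfl

variable {R ι : Type*} [Fintype ι] [Field R] [LinearOrder R] [IsStrictOrderedRing R]

theorem dotProduct_mulVec_le_of_mem_doublyStochastic [DecidableEq ι] {s t : ι → R}
    {M : Matrix ι ι R} (hst : Monovary s t) (hM : M ∈ doublyStochastic R ι) :
    s ⬝ᵥ M *ᵥ t ≤ s ⬝ᵥ t := by
  obtain ⟨w, hw_nonneg, hw_sum, rfl⟩ := exists_eq_sum_perm_of_mem_doublyStochastic hM
  calc s ⬝ᵥ (∑ π, w π • π.permMatrix R) *ᵥ t
      = ∑ π, w π * ∑ i, s i * t (π i) := by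
        simp only [sum_mulVec, dotProduct_sum, smul_mulVec, dotProduct_smul, permMatrix_mulVec,
          smul_eq_mul]
        rfl
    _ ≤ ∑ π, w π * (s ⬝ᵥ t) := by
        gcongr with π
        · exact hw_nonneg π
        · exact hst.sum_mul_comp_perm_le_sum_mul
    _ = s ⬝ᵥ t := by rw [← Finset.sum_mul, hw_sum, one_mul]

/-- A doubly substochastic matrix: a square matrix with nonnegative entries all of whose row sums
and column sums are at most `1`. -/
structure IsDoublySubstochastic (M : Matrix ι ι R) : Prop where
  nonneg : ∀ i j, 0 ≤ M i j
  sum_row_le_one : ∀ i, ∑ j, M i j ≤ 1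
  sum_col_le_one : ∀ j, ∑ i, M i j ≤ 1

/-- The standard dilation of a square matrix `M` to one whose row and column sums are all `1`:
the two off-diagonal blocks are diagonal and hold the row and the column defects of `M`. -/
def stochasticDilation [DecidableEq ι] (M : Matrix ι ι R) : Matrix (ι ⊕ ι) (ι ⊕ ι) R :=
  fromBlocks M (diagonal fun i ↦ 1 - ∑ j, M i j) (diagonal fun j ↦ 1 - ∑ i, M i j) Mᵀ

theorem IsDoublySubstochastic.stochasticDilation_mem_doublyStochastic [DecidableEq ι]
    {M : Matrix ι ι R} (hM : IsDoublySubstochastic M) :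
    stochasticDilation M ∈ doublyStochastic R (ι ⊕ ι) := by
  refine mem_doublyStochastic_iff_sum.2 ⟨?_, ?_, ?_⟩
  · rintro (i | i) (j | j)
    · exact hM.nonneg i j
    · simp only [stochasticDilation, fromBlocks_apply₁₂, diagonal_apply]
      split_ifs
      exacts [sub_nonneg.2 (hM.sum_row_le_one i), le_rfl]
    · simp only [stochasticDilation, fromBlocks_apply₂₁, diagonal_apply]
      split_ifs
      exacts [sub_nonneg.2 (hM.sum_col_le_one i), le_rfl]
    · exact hM.nonneg j i
  · rintro (i | i) <;> simp [stochasticDilation, diagonal_apply]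
  · rintro (j | j) <;> simp [stochasticDilation, diagonal_apply]

theorem IsDoublySubstochastic.dotProduct_mulVec_le {s t : ι → R} {M : Matrix ι ι R}
    (hM : IsDoublySubstochastic M) (hst : Monovary s t) (hs : 0 ≤ s) (ht : 0 ≤ t) :
    s ⬝ᵥ M *ᵥ t ≤ s ⬝ᵥ t := by
  classical
  simpa [stochasticDilation, fromBlocks_mulVec] using
    dotProduct_mulVec_le_of_mem_doublyStochastic (monovary_sumElim_zero hst hs ht)
      hM.stochasticDilation_mem_doublyStochastic

end Rearrangement

section Bessel

variable {𝕜 E ι : Type*} [RCLike 𝕜] [NormedAddCommGroup E] [InnerProductSpace 𝕜 E] [Fintype ι]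

variable (𝕜) in
/-- A finite Bessel family with bound `1`: a family of vectors satisfying the conclusion of Bessel's
inequality. Unlike orthonormal families, such families may contain zero vectors. -/
def IsBesselFamily (u : ι → E) : Prop :=
  ∀ x, ∑ i, ‖⟪u i, x⟫_𝕜‖ ^ 2 ≤ ‖x‖ ^ 2

theorem isBesselFamily_of_orthonormal_support {u : ι → E}
    (hu : Orthonormal 𝕜 fun i : {i // u i ≠ 0} ↦ u i) : IsBesselFamily 𝕜 u := by
  classical
  intro x
  have h_zero (i : {i // ¬u i ≠ 0}) : ‖⟪u i, x⟫_𝕜‖ ^ 2 = 0 := by simp [not_not.1 i.2]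
  calc ∑ i, ‖⟪u i, x⟫_𝕜‖ ^ 2
      = ∑ i : {i // u i ≠ 0}, ‖⟪u i, x⟫_𝕜‖ ^ 2 := by
        rw [← Fintype.sum_subtype_add_sum_subtype (fun i ↦ u i ≠ 0),
          Fintype.sum_eq_zero _ h_zero, add_zero]
    _ ≤ ‖x‖ ^ 2 := hu.sum_inner_products_le x

theorem isBesselFamily_orthonormalBasis (b : OrthonormalBasis ι 𝕜 E) : IsBesselFamily 𝕜 b :=
  fun _ ↦ b.orthonormal.sum_inner_products_le _

namespace IsBesselFamily

variable {u w : ι → E}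

theorem norm_le_one (hu : IsBesselFamily 𝕜 u) (i : ι) : ‖u i‖ ≤ 1 := by
  have h_sq : (‖u i‖ ^ 2) ^ 2 ≤ ‖u i‖ ^ 2 := by
    calc (‖u i‖ ^ 2) ^ 2 = ‖⟪u i, u i⟫_𝕜‖ ^ 2 := by simp [inner_self_eq_norm_sq_to_K]
      _ ≤ ∑ j, ‖⟪u j, u i⟫_𝕜‖ ^ 2 :=
        Finset.single_le_sum (f := fun j ↦ ‖⟪u j, u i⟫_𝕜‖ ^ 2) (fun _ _ ↦ sq_nonneg _)
          (Finset.mem_univ i)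
      _ ≤ ‖u i‖ ^ 2 := hu (u i)
  by_contra! h
  nlinarith [one_lt_pow₀ h two_ne_zero]

theorem sum_norm_sq_inner_le_one {κ : Type*} [Fintype κ] {w : κ → E} (hu : IsBesselFamily 𝕜 u)
    (hw : IsBesselFamily 𝕜 w) (j : κ) : ∑ i, ‖⟪u i, w j⟫_𝕜‖ ^ 2 ≤ 1 :=
  (hu (w j)).trans (pow_le_one₀ (norm_nonneg _) (hw.norm_le_one j))

theorem isDoublySubstochastic (hu : IsBesselFamily 𝕜 u) (hw : IsBesselFamily 𝕜 w) :
    IsDoublySubstochastic (of fun i j ↦ ‖⟪u i, w j⟫_𝕜‖ ^ 2) where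
  nonneg _ _ := sq_nonneg _
  sum_row_le_one i := by
    simpa only [of_apply, norm_inner_symm (u i)] using hw.sum_norm_sq_inner_le_one hu i
  sum_col_le_one := hu.sum_norm_sq_inner_le_one hw

theorem sum_mul_norm_sq_inner_le (hu : IsBesselFamily 𝕜 u) (hw : IsBesselFamily 𝕜 w)
    {s t : ι → ℝ} (hst : Monovary s t) (hs : 0 ≤ s) (ht : 0 ≤ t) :
    ∑ i, ∑ j, s i * t j * ‖⟪u i, w j⟫_𝕜‖ ^ 2 ≤ ∑ i, s i * t i := by
  refine le_of_eq_of_le ?_ ((hu.isDoublySubstochastic hw).dotProduct_mulVec_le hst hs ht)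
  simp only [dotProduct, mulVec, of_apply, Finset.mul_sum]
  exact Finset.sum_congr rfl fun i _ ↦ Finset.sum_congr rfl fun j _ ↦ by ring

end IsBesselFamily

theorem re_mul_le_half_sq_norm_add_sq_norm (x y : 𝕜) :
    RCLike.re (x * y) ≤ (‖x‖ ^ 2 + ‖y‖ ^ 2) / 2 := by
  have h : RCLike.re (x * y) ≤ ‖x‖ * ‖y‖ := (RCLike.re_le_norm _).trans_eq (norm_mul x y)
  linarith [two_mul_le_add_sq ‖x‖ ‖y‖]

variable {F : Type*} [NormedAddCommGroup F] [InnerProductSpace 𝕜 F]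

theorem sum_mul_re_inner_mul_inner_le {v w : ι → E} {u p : ι → F}
    (hv : IsBesselFamily 𝕜 v) (hw : IsBesselFamily 𝕜 w)
    (hu : IsBesselFamily 𝕜 u) (hp : IsBesselFamily 𝕜 p)
    {s t : ι → ℝ} (hst : Monovary s t) (hs : 0 ≤ s) (ht : 0 ≤ t) :
    ∑ i, ∑ j, s i * t j * RCLike.re (⟪v i, w j⟫_𝕜 * ⟪p j, u i⟫_𝕜) ≤ ∑ i, s i * t i := by
  calc ∑ i, ∑ j, s i * t j * RCLike.re (⟪v i, w j⟫_𝕜 * ⟪p j, u i⟫_𝕜)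
      ≤ ∑ i, ∑ j, s i * t j * ((‖⟪v i, w j⟫_𝕜‖ ^ 2 + ‖⟪u i, p j⟫_𝕜‖ ^ 2) / 2) := by
        gcongr with i _ j _
        · exact mul_nonneg (hs i) (ht j)
        · rw [norm_inner_symm (u i)]
          exact re_mul_le_half_sq_norm_add_sq_norm _ _
    _ = (∑ i, ∑ j, s i * t j * ‖⟪v i, w j⟫_𝕜‖ ^ 2 +
          ∑ i, ∑ j, s i * t j * ‖⟪u i, p j⟫_𝕜‖ ^ 2) / 2 := by
        simp only [← Finset.sum_add_distrib, Finset.sum_div]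
        exact Finset.sum_congr rfl fun i _ ↦ Finset.sum_congr rfl fun j _ ↦ by ring
    _ ≤ ∑ i, s i * t i := by
        linarith [hv.sum_mul_norm_sq_inner_le hw hst hs ht,
          hu.sum_mul_norm_sq_inner_le hp hst hs ht]

end Bessel

section SingularVectors

variable {𝕜 E F : Type*} [RCLike 𝕜]
  [NormedAddCommGroup E] [InnerProductSpace 𝕜 E] [FiniteDimensional 𝕜 E]
  [NormedAddCommGroup F] [InnerProductSpace 𝕜 F] [FiniteDimensional 𝕜 F] (T S : E →ₗ[𝕜] F)

/-- The right singular vectors of `T`: an orthonormal eigenbasis of `T†T`, in the order of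
`T.singularValues`. -/
noncomputable def rightSingularBasis : OrthonormalBasis (Fin (finrank 𝕜 E)) 𝕜 E :=
  T.isSymmetric_adjoint_comp_self.eigenvectorBasis rfl

/-- The left singular vectors of `T`, indexed like the right ones: the unit vector in the direction
of `T vᵢ`, or `0` when the `i`-th singular value vanishes (because `0⁻¹ = 0`). -/
noncomputable def leftSingularVector (i : Fin (finrank 𝕜 E)) : F :=
  (T.singularValues i : 𝕜)⁻¹ • T (rightSingularBasis T i)

theorem inner_map_rightSingularBasis (i j : Fin (finrank 𝕜 E)) :
    ⟪T (rightSingularBasis T i), T (rightSingularBasis T j)⟫_𝕜 =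
      if i = j then (T.singularValues j : 𝕜) ^ 2 else 0 := by
  have h_eigen : (LinearMap.adjoint T) (T (rightSingularBasis T j)) =
      ((T.singularValues j : 𝕜) ^ 2) • rightSingularBasis T j := by
    rw [← RCLike.ofReal_pow, T.sq_singularValues_fin rfl]
    exact T.isSymmetric_adjoint_comp_self.apply_eigenvectorBasis rfl j
  rw [← LinearMap.adjoint_inner_right, h_eigen, inner_smul_right,
    orthonormal_iff_ite.1 (rightSingularBasis T).orthonormal, mul_ite, mul_one, mul_zero]

theorem norm_map_rightSingularBasis (i : Fin (finrank 𝕜 E)) :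
    ‖T (rightSingularBasis T i)‖ = T.singularValues i := by
  rw [← sq_eq_sq₀ (norm_nonneg _) (T.singularValues_nonneg i), ← inner_self_eq_norm_sq (𝕜 := 𝕜),
    inner_map_rightSingularBasis, if_pos rfl, ← RCLike.ofReal_pow, RCLike.ofReal_re]

theorem singularValues_smul_leftSingularVector (i : Fin (finrank 𝕜 E)) :
    (T.singularValues i : 𝕜) • leftSingularVector T i = T (rightSingularBasis T i) := by
  rcases eq_or_ne (T.singularValues i) 0 with h_zero | h_ne
  · have h_map : T (rightSingularBasis T i) = 0 := by
      rw [← norm_eq_zero, norm_map_rightSingularBasis, h_zero]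
    rw [h_map, h_zero, RCLike.ofReal_zero, zero_smul]
  · rw [leftSingularVector, smul_inv_smul₀ (RCLike.ofReal_ne_zero.2 h_ne)]

theorem norm_leftSingularVector {i : Fin (finrank 𝕜 E)} (hi : leftSingularVector T i ≠ 0) :
    ‖leftSingularVector T i‖ = 1 := by
  have h_ne : T.singularValues i ≠ 0 := by
    contrapose! hi
    simp [leftSingularVector, hi]
  rw [leftSingularVector, norm_smul, norm_map_rightSingularBasis, norm_inv,
    RCLike.norm_of_nonneg (T.singularValues_nonneg i), inv_mul_cancel₀ h_ne]

theorem orthonormal_leftSingularVector_support :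
    Orthonormal 𝕜 fun i : {i // leftSingularVector T i ≠ 0} ↦ leftSingularVector T i := by
  refine ⟨fun i ↦ norm_leftSingularVector T i.2, fun i j hij ↦ ?_⟩
  simp only [leftSingularVector, inner_smul_left, inner_smul_right, inner_map_rightSingularBasis,
    if_neg (Subtype.coe_ne_coe.2 hij), mul_zero]

theorem isBesselFamily_leftSingularVector : IsBesselFamily 𝕜 (leftSingularVector T) :=
  isBesselFamily_of_orthonormal_support (orthonormal_leftSingularVector_support T)

theorem trace_adjoint_comp_eq_sum_inner_mul_inner {ι κ : Type*} [Fintype ι] [Fintype κ]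
    (v : OrthonormalBasis ι 𝕜 E) (w : OrthonormalBasis κ 𝕜 E) :
    LinearMap.trace 𝕜 E (LinearMap.adjoint S ∘ₗ T) =
      ∑ i, ∑ j, ⟪v i, w j⟫_𝕜 * ⟪S (w j), T (v i)⟫_𝕜 := by
  rw [LinearMap.trace_eq_sum_inner _ v]
  refine Finset.sum_congr rfl fun i _ ↦ ?_
  rw [← w.sum_inner_mul_inner]
  simp only [LinearMap.comp_apply, LinearMap.adjoint_inner_right]

theorem re_trace_adjoint_comp_eq_sum_singularValues :
    RCLike.re (LinearMap.trace 𝕜 E (LinearMap.adjoint S ∘ₗ T)) =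
      ∑ i : Fin (finrank 𝕜 E), ∑ j : Fin (finrank 𝕜 E), T.singularValues i * S.singularValues j *
        RCLike.re (⟪rightSingularBasis T i, rightSingularBasis S j⟫_𝕜 *
          ⟪leftSingularVector S j, leftSingularVector T i⟫_𝕜) := by
  rw [trace_adjoint_comp_eq_sum_inner_mul_inner T S (rightSingularBasis T) (rightSingularBasis S)]
  simp only [map_sum]
  refine Finset.sum_congr rfl fun i _ ↦ Finset.sum_congr rfl fun j _ ↦ ?_
  rw [← singularValues_smul_leftSingularVector T i, ← singularValues_smul_leftSingularVector S j,
    inner_smul_left, inner_smul_right, RCLike.conj_ofReal, ← RCLike.re_ofReal_mul]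
  congr 1
  push_cast
  ring

theorem re_trace_adjoint_comp_le_sum_finrank_domain :
    RCLike.re (LinearMap.trace 𝕜 E (LinearMap.adjoint S ∘ₗ T)) ≤
      ∑ i : Fin (finrank 𝕜 E), T.singularValues i * S.singularValues i := by
  rw [re_trace_adjoint_comp_eq_sum_singularValues]
  have h_antitone (L : E →ₗ[𝕜] F) : Antitone fun i : Fin (finrank 𝕜 E) ↦ L.singularValues i :=
    fun _ _ hij ↦ L.singularValues_antitone hij
  exact sum_mul_re_inner_mul_inner_le (isBesselFamily_orthonormalBasis _)
    (isBesselFamily_orthonormalBasis _) (isBesselFamily_leftSingularVector T)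
    (isBesselFamily_leftSingularVector S) ((h_antitone T).monovary (h_antitone S))
    (fun i ↦ T.singularValues_nonneg i) fun i ↦ S.singularValues_nonneg i

theorem stmt13_general :
    RCLike.re (LinearMap.trace 𝕜 E (LinearMap.adjoint S ∘ₗ T)) ≤
      ∑ i ∈ Finset.range (min (finrank 𝕜 F) (finrank 𝕜 E)),
        T.singularValues i * S.singularValues i := by
  have h_vanish (i : ℕ) (hi : finrank 𝕜 F ≤ i) : T.singularValues i = 0 :=
    T.singularValues_eq_zero_iff_le_finrank_range.2 ((Submodule.finrank_le _).trans hi)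
  refine (re_trace_adjoint_comp_le_sum_finrank_domain T S).trans_eq ?_
  rw [Fin.sum_univ_eq_sum_range fun i ↦ T.singularValues i * S.singularValues i]
  refine (Finset.sum_subset (Finset.range_mono (min_le_right _ _)) fun i hi hi' ↦ ?_).symm
  rw [h_vanish i (by grind), zero_mul]

end SingularVectors

section Matrix

theorem comp_perm_comp_sort_eq_comp_rev {n : ℕ} {α : Type*} [LinearOrder α] {s : Fin n → α}
    (hs : Antitone s) (π : Equiv.Perm (Fin n)) :
    (s ∘ π) ∘ Tuple.sort (s ∘ π) = s ∘ Fin.rev := by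
  rw [Tuple.comp_perm_comp_sort_eq_comp_sort]
  exact (Tuple.comp_sort_eq_comp_iff_monotone (σ := Fin.revPerm)).2
    (hs.comp Fin.rev_anti) |>.symm

variable {𝕜 m n : Type*} [RCLike 𝕜] [Fintype m] [Fintype n] [DecidableEq n] (A B : Matrix m n 𝕜)

theorem adjoint_toEuclideanLin_comp_toEuclideanLin :
    LinearMap.adjoint (toEuclideanLin B) ∘ₗ toEuclideanLin A = toEuclideanLin (Bᴴ * A) := by
  classical
  rw [← toEuclideanLin_conjTranspose_eq_adjoint, toLpLin_mul_same]

theorem trace_adjoint_toEuclideanLin_comp :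
    LinearMap.trace 𝕜 _ (LinearMap.adjoint (toEuclideanLin B) ∘ₗ toEuclideanLin A) =
      (A * Bᴴ).trace := by
  rw [adjoint_toEuclideanLin_comp_toEuclideanLin, Matrix.trace_mul_comm,
    toEuclideanLin_eq_toLin_orthonormal, Matrix.trace_toLin_eq]

theorem sqrt_eigenvalues_conjTranspose_mul_self (j : n) :
    √((isHermitian_conjTranspose_mul_self A).eigenvalues j) =
      (toEuclideanLin A).singularValues
        ((Fintype.equivOfCardEq (Fintype.card_fin (Fintype.card n))).symm j) := by
  rw [(toEuclideanLin A).singularValues_fin (finrank_euclideanSpace (𝕜 := 𝕜) (ι := n))]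
  simp only [IsHermitian.eigenvalues, IsHermitian.eigenvalues₀,
    adjoint_toEuclideanLin_comp_toEuclideanLin]

theorem singularValue_eq_singularValues_toEuclideanLin {m n : ℕ} (A : Matrix (Fin m) (Fin n) ℝ)
    (i : Fin (min m n)) : singularValue A i = (toEuclideanLin A).singularValues i := by
  let π : Equiv.Perm (Fin n) :=
    (Fintype.equivOfCardEq (Fintype.card_fin _)).symm.trans (finCongr (Fintype.card_fin n))
  have h_eigenvalues : (fun j ↦ √((isHermitian_conjTranspose_mul_self A).eigenvalues j)) =
      (fun j : Fin n ↦ (toEuclideanLin A).singularValues j) ∘ π := by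
    funext j
    rw [sqrt_eigenvalues_conjTranspose_mul_self A j]
    simp [π]
  have h_antitone : Antitone fun j : Fin n ↦ (toEuclideanLin A).singularValues j :=
    fun _ _ hij ↦ (toEuclideanLin A).singularValues_antitone hij
  rw [singularValue, h_eigenvalues, comp_perm_comp_sort_eq_comp_rev h_antitone,
    Function.comp_apply, Fin.rev_rev, Fin.val_castLE]

end Matrix

/-- Von Neumann's trace inequality for rectangular matrices:
`tr(A·Bᵀ) ≤ ∑_{i=1}^{min m n} σᵢ(A)·σᵢ(B)`. -/
theorem stmt13 (m n : ℕ) (A B : Matrix (Fin m) (Fin n) ℝ) :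
    Matrix.trace (A * Bᵀ) ≤ ∑ i : Fin (min m n), singularValue A i * singularValue B i := by
  simpa [trace_adjoint_toEuclideanLin_comp, singularValue_eq_singularValues_toEuclideanLin,
    Finset.sum_range] using stmt13_general (toEuclideanLin A) (toEuclideanLin B)
end
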